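/- The permutation η₁ = σ₁σ₂ρ has order n. -/

import Mathlib

/-- The lexicographic product `C_n[mK_1]`: vertices `(i,j)` with `(i₁,j₁) ~ (i₂,j₂)`
iff `i₂ = i₁ + 1` or `i₁ = i₂ + 1` (indices modulo `n`). -/
def lexCycle (n m : ℕ) : SimpleGraph (ZMod n × ZMod m) :=
  SimpleGraph.fromRel (fun u v => v.1 = u.1 + 1)

/-- The representative in `{1, …, n}` of `i` modulo `n`. -/
def zrep {n : ℕ} (i : ZMod n) : ℕ := if i.val = 0 then n else i.val

/-!
The permutation `η₁` advances the first coordinate by one, so `n` divides its order, and the order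
is exactly `n` as soon as `η₁ⁿ` fixes the fibre over `0` pointwise. In that fibre the first step is
`(0, j) ↦ (1, j + 1)`, and each later pair of steps is `(v, j) ↦ (v + 2, j - 4v)` with `v` odd.
Since `4(1 + 3 + ⋯ + (n - 2)) = (n - 1)²`, going once around sends `j` to `j + 1 - (n - 1)²`,
which is `j` modulo `m` because `m ∣ n`.
-/

section RotationFactor

open Function

variable {X : Type*} {n : ℕ} {π : X → ZMod n}

theorem map_iterate_of_semiconj_add_one {f : X → X} (h : Semiconj π f (· + 1)) (k : ℕ) (x : X) :
    π (f^[k] x) = π x + k := by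
  rw [(h.iterate_right k).eq, add_right_iterate, nsmul_one]

theorem isPeriodicPt_of_semiconj_add_one {f : X → X} (hf : Injective f)
    (h : Semiconj π f (· + 1)) (hzero : ∀ x, π x = 0 → IsPeriodicPt f n x) (x : X) :
    IsPeriodicPt f n x := by
  rcases eq_or_ne n 0 with rfl | hn
  · exact isPeriodicPt_zero f x
  have : NeZero n := ⟨hn⟩
  obtain ⟨k, hk⟩ := ZMod.natCast_zmod_surjective (-π x)
  have hfibre : π (f^[k] x) = 0 := by
    rw [map_iterate_of_semiconj_add_one h, hk, add_neg_cancel]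
  apply hf.iterate k
  rw [(Commute.iterate_iterate_self f k n).eq]
  exact hzero _ hfibre

theorem orderOf_eq_of_semiconj_add_one [Nonempty X] {η : Equiv.Perm X}
    (h : Semiconj π η (· + 1)) (hzero : ∀ x, π x = 0 → IsPeriodicPt η n x) :
    orderOf η = n := by
  apply Nat.dvd_antisymm
  · refine orderOf_dvd_of_pow_eq_one (Equiv.ext fun x => ?_)
    rw [← Equiv.Perm.iterate_eq_pow]
    exact isPeriodicPt_of_semiconj_add_one η.injective h hzero x
  · obtain ⟨x⟩ := ‹Nonempty X›
    have hx := map_iterate_of_semiconj_add_one h (orderOf η) x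
    rw [Equiv.Perm.iterate_eq_pow, pow_orderOf_eq_one, Equiv.Perm.one_apply] at hx
    exact (ZMod.natCast_eq_zero_iff _ _).1 (left_eq_add.1 hx)

end RotationFactor

theorem zrep_add_one {n : ℕ} [NeZero n] (i : ZMod n) : zrep (i + 1) = i.val + 1 := by
  obtain ⟨v, hv, rfl⟩ : ∃ v < n, (v : ZMod n) = i := ⟨i.val, i.val_lt, i.natCast_zmod_val⟩
  rw [ZMod.val_natCast_of_lt hv, ← Nat.cast_succ, zrep, ZMod.val_natCast]
  rcases (Nat.succ_le_of_lt hv).lt_or_eq with hlt | heq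
  · rw [Nat.mod_eq_of_lt hlt, if_neg v.succ_ne_zero]
  · rw [heq, Nat.mod_self, if_pos rfl, ← heq]

section EtaOne

variable {n m : ℕ}

/-- The paper's `η₁ = σ₁σ₂ρ` in coordinates. Permutations there act on the right, so `σ₁` is applied
first. -/
def etaOne (x : ZMod n × ZMod m) : ZMod n × ZMod m :=
  (x.1 + 1, if x.1 = 0 then x.2 + 1 else 1 - x.2 - (-1) ^ x.1.val * (2 * x.1.val - 1))

theorem coe_mul_mul_eq_etaOne [NeZero n] {σ₁ σ₂ ρ : Equiv.Perm (ZMod n × ZMod m)}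
    (hσ₁ : ∀ (i : ZMod n) (j : ZMod m),
      σ₁ (i, j) = if i = 0 then (i + 1, 1 - j) else (i + 1, j))
    (hσ₂ : ∀ (i : ZMod n) (j : ZMod m),
      σ₂ (i, j) = if i = 1 then (2 - i, 2 - j)
        else (2 - i, j + (-1 : ZMod m) ^ (zrep i - 1) * ((2 * zrep i - 3 : ℕ) : ZMod m)))
    (hρ : ∀ (i : ZMod n) (j : ZMod m),
      ρ (i, j) = if i = 1 then (2 - i, j) else (2 - i, 1 - j)) :
    ⇑(ρ * σ₂ * σ₁) = etaOne := by
  funext ⟨i, j⟩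
  have hreflect : 2 - (2 - (i + 1)) = i + 1 := sub_sub_cancel 2 (i + 1)
  have hne_one : 2 - (i + 1) = 1 ↔ i = 0 := by
    constructor <;> intro h <;> linear_combination -h
  simp only [Equiv.Perm.mul_apply, etaOne]
  by_cases hi : i = 0
  · rw [hσ₁, if_pos hi, hσ₂, if_pos (add_eq_right.2 hi), hρ, if_pos (hne_one.2 hi), if_pos hi,
      hreflect]
    ring_nf
  · have hcoeff : ((2 * (i.val + 1) - 3 : ℕ) : ZMod m) = 2 * i.val - 1 := by
      have hval : 1 ≤ i.val := Nat.one_le_iff_ne_zero.2 ((ZMod.val_ne_zero i).2 hi)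
      rw [show 2 * (i.val + 1) - 3 = 2 * i.val - 1 by lia, Nat.cast_sub (by lia)]
      push_cast
      rfl
    rw [hσ₁, if_neg hi, hσ₂, if_neg (mt add_eq_right.1 hi), hρ, if_neg (mt hne_one.1 hi), if_neg hi,
      hreflect, zrep_add_one, Nat.add_sub_cancel, hcoeff, sub_add_eq_sub_sub]

theorem semiconj_fst_etaOne :
    Function.Semiconj Prod.fst (etaOne : ZMod n × ZMod m → ZMod n × ZMod m) (· + 1) :=
  fun _ => rfl

theorem etaOne_zero (j : ZMod m) : etaOne ((0 : ZMod n), j) = (1, j + 1) := by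
  simp [etaOne]

theorem etaOne_natCast {v : ℕ} (hv : v ≠ 0) (hvn : v < n) (j : ZMod m) :
    etaOne ((v : ZMod n), j) = ((v : ZMod n) + 1, 1 - j - (-1) ^ v * (2 * v - 1)) := by
  have hv₀ : (v : ZMod n) ≠ 0 := fun h =>
    Nat.not_dvd_of_pos_of_lt (Nat.pos_of_ne_zero hv) hvn ((ZMod.natCast_eq_zero_iff _ _).1 h)
  simp only [etaOne, if_neg hv₀, ZMod.val_natCast_of_lt hvn]

theorem etaOne_etaOne_natCast_of_odd {v : ℕ} (hv : Odd v) (hvn : v + 1 < n) (j : ZMod m) :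
    etaOne (etaOne ((v : ZMod n), j)) = (((v + 2 : ℕ) : ZMod n), j - 4 * v) := by
  rw [etaOne_natCast hv.pos.ne' (by lia), ← Nat.cast_add_one, etaOne_natCast v.add_one_ne_zero hvn,
    hv.neg_one_pow, hv.add_one.neg_one_pow]
  ext
  · push_cast
    ring
  · push_cast
    ring

theorem etaOne_iterate_two_mul_add_one {k : ℕ} (hk : 2 * k < n) (j : ZMod m) :
    etaOne^[2 * k + 1] ((0 : ZMod n), j) =
      (((2 * k + 1 : ℕ) : ZMod n), j + 1 - ((2 * k : ℕ) : ZMod m) ^ 2) := by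
  induction k with
  | zero => simp [etaOne_zero]
  | succ k ih =>
    rw [show 2 * (k + 1) + 1 = (2 * k + 1) + 1 + 1 by ring, Function.iterate_succ_apply',
      Function.iterate_succ_apply', ih (by lia),
      etaOne_etaOne_natCast_of_odd (odd_two_mul_add_one k) (by lia)]
    ext
    · rfl
    · push_cast
      ring

theorem isPeriodicPt_etaOne_zero (hn : Odd n) (hmn : m ∣ n) (j : ZMod m) :
    Function.IsPeriodicPt etaOne n ((0 : ZMod n), j) := by
  obtain ⟨k, rfl⟩ := hn
  have hk : ((2 * k : ℕ) : ZMod m) = -1 := by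
    rw [← ZMod.natCast_eq_zero_iff, Nat.cast_add_one] at hmn
    exact eq_neg_of_add_eq_zero_left hmn
  rw [Function.IsPeriodicPt, Function.IsFixedPt, etaOne_iterate_two_mul_add_one (by lia), hk,
    ZMod.natCast_self, neg_one_sq, add_sub_cancel_right]

end EtaOne

theorem statement12
    (m s n : ℕ) (hm : 3 ≤ m) (hmo : Odd m) (hs : 0 < s) (hso : Odd s) (hn : n = s * m)
    (σ₁ σ₂ ρ : Equiv.Perm (ZMod n × ZMod m))
    (hσ₁ : ∀ (i : ZMod n) (j : ZMod m),
      σ₁ (i, j) = if i = 0 then (i + 1, 1 - j) else (i + 1, j))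
    (hσ₂ : ∀ (i : ZMod n) (j : ZMod m),
      σ₂ (i, j) = if i = 1 then (2 - i, 2 - j)
        else (2 - i, j + (-1 : ZMod m) ^ (zrep i - 1) * ((2 * zrep i - 3 : ℕ) : ZMod m)))
    (hρ : ∀ (i : ZMod n) (j : ZMod m),
      ρ (i, j) = if i = 1 then (2 - i, j) else (2 - i, 1 - j))
    :
    orderOf (ρ * σ₂ * σ₁) = n := by
  have hn_odd : Odd n := hn ▸ hso.mul hmo
  have hmn : m ∣ n := hn ▸ dvd_mul_left m s
  have : NeZero n := ⟨hn_odd.pos.ne'⟩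
  have hη : ⇑(ρ * σ₂ * σ₁) = etaOne := coe_mul_mul_eq_etaOne hσ₁ hσ₂ hρ
  apply orderOf_eq_of_semiconj_add_one (π := Prod.fst)
  · rw [hη]
    exact semiconj_fst_etaOne
  · rintro ⟨_, j⟩ rfl
    rw [hη]
    exact isPeriodicPt_etaOne_zero hn_odd hmn j
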